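/- Let 1 < p₀, p₁ < ∞, 0 < θ < 1, and define p by 1/p = (1−θ)/p₀ + θ/p₁. For a measurable function f : (0,∞) → ℝ the following are equivalent: (i) C|f| ∈ L^p(0,∞); (ii) there exist measurable f₀, f₁ : (0,∞) → [0,∞) with C f₀ ∈ L^{p₀}(0,∞), C f₁ ∈ L^{p₁}(0,∞), and |f(x)| ≤ f₀(x)^{1−θ} f₁(x)^{θ} for almost every x. (That is, the Calderón product (Ces_{p₀})^{1−θ}(Ces_{p₁})^{θ} equals Ces_p on [0,∞).) -/

import Mathlib

open MeasureTheory Set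

/-- The Cesàro operator applied to a nonnegative part: `(1/x)∫_0^x g(t) dt` in `[0,∞]`. -/
noncomputable def cesE (g : ℝ → ℝ) (x : ℝ) : ENNReal :=
  (∫⁻ t in Set.Ioo 0 x, ENNReal.ofReal (g t)) / ENNReal.ofReal x

/-- Membership in the Cesàro space `Ces_p(0,∞)`: `C g ∈ L^p(0,∞)`. -/
def memCes (p : ℝ) (g : ℝ → ℝ) : Prop :=
  (∫⁻ x in Set.Ioi (0:ℝ), cesE g x ^ p) < ⊤

/-!
The symmetric kernel operator `Sφ(x) = ∫₀^∞ φ(t) / max(x, t) dt` is bounded on `L^q` for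
`1 < q < ∞` (Schur test with power weights), `Sφ` is nonincreasing, and `Cφ ≤ Sφ ≤ S(Cφ)`. Hence
`φ ∈ Ces_p` has the nonincreasing majorant `H = Sφ ∈ L^p` of its averages, and one factorises
`φ = (φ H^{p/p₀-1})^{1-θ} (φ H^{p/p₁-1})^θ`. Each factor lies in the right Cesàro space because
`C(φ H^α) ≤ C(H^{1+α})` for `α > -1`: for `α ≤ 0` the weight `H^α` is nondecreasing and can be
pulled out of the average, and for `α ≥ 0` it is nonincreasing, so `∫₀^t φ ≤ ∫₀^t H` for all `t`
implies `∫₀^x φ H^α ≤ ∫₀^x H · H^α`. The converse inclusion is Hölder's inequality, applied once to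
the average and once to the integral over `(0, ∞)`.
-/

open scoped ENNReal

section ENNRealPowers

lemma mul_rpow_le_rpow_one_add (a : ℝ≥0∞) {α : ℝ} (hα : -1 < α) : a * a ^ α ≤ a ^ (1 + α) := by
  have hα' : 0 < 1 + α := by linarith
  by_cases ha : a = ⊤
  · rw [ha, ENNReal.top_rpow_of_pos hα']
    exact le_top
  · rw [ENNReal.rpow_add_of_add_pos ha _ _ hα', ENNReal.rpow_one]

lemma rpow_le_rpow_of_nonpos {a b : ℝ≥0∞} (hab : a ≤ b) {α : ℝ} (hα : α ≤ 0) :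
    b ^ α ≤ a ^ α := by
  have hinv := ENNReal.inv_le_inv' (ENNReal.rpow_le_rpow hab (neg_nonneg.2 hα))
  simpa only [ENNReal.rpow_neg, inv_inv] using hinv

lemma mul_rpow_rpow_mul_mul_rpow_rpow_eq_self (y : ℝ≥0∞) {h : ℝ≥0∞} (h0 : h ≠ 0) (ht : h ≠ ⊤)
    {a b θ : ℝ} (hθ0 : 0 ≤ θ) (hθ1 : θ ≤ 1) (hab : (1 - θ) * a + θ * b = 0) :
    (y * h ^ a) ^ (1 - θ) * (y * h ^ b) ^ θ = y := by
  have hθ1' : 0 ≤ 1 - θ := by linarith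
  rw [ENNReal.mul_rpow_of_nonneg _ _ hθ1', ENNReal.mul_rpow_of_nonneg _ _ hθ0,
    mul_mul_mul_comm, ← ENNReal.rpow_add_of_nonneg _ _ hθ1' hθ0, ← ENNReal.rpow_mul,
    ← ENNReal.rpow_mul, ← ENNReal.rpow_add _ _ h0 ht, mul_comm a, mul_comm b, hab,
    sub_add_cancel, ENNReal.rpow_one, ENNReal.rpow_zero, mul_one]

end ENNRealPowers

section SchurTest

variable {α β : Type*} [MeasurableSpace α] [MeasurableSpace β] {μ : Measure α} {ν : Measure β}
  {p q : ℝ}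

lemma rpow_lintegral_mul_le_weighted (hpq : p.HolderConjugate q) {k f w : β → ℝ≥0∞}
    (hk : Measurable k) (hf : Measurable f) (hw : Measurable w)
    (hw0 : ∀ᵐ y ∂ν, w y ≠ 0) (hwt : ∀ᵐ y ∂ν, w y ≠ ⊤) :
    (∫⁻ y, k y * f y ∂ν) ^ p ≤
      (∫⁻ y, k y * w y ^ q ∂ν) ^ (p - 1) * ∫⁻ y, k y * (f y / w y) ^ p ∂ν := by
  have hp := hpq.pos
  have hq := hpq.symm.pos
  have hsplit : ∀ᵐ y ∂ν, k y * f y = (k y * (f y / w y) ^ p) ^ p⁻¹ * (k y * w y ^ q) ^ q⁻¹ := by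
    filter_upwards [hw0, hwt] with y h0 ht
    rw [ENNReal.mul_rpow_of_nonneg _ _ (by positivity), ENNReal.mul_rpow_of_nonneg _ _
      (by positivity), ENNReal.rpow_rpow_inv hp.ne', ENNReal.rpow_rpow_inv hq.ne',
      mul_mul_mul_comm, ← ENNReal.rpow_add_of_nonneg _ _ (by positivity) (by positivity),
      hpq.inv_add_inv_eq_one, ENNReal.rpow_one, ENNReal.div_mul_cancel h0 ht]
  calc (∫⁻ y, k y * f y ∂ν) ^ p
      = (∫⁻ y, (k y * (f y / w y) ^ p) ^ p⁻¹ * (k y * w y ^ q) ^ q⁻¹ ∂ν) ^ p := by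
        rw [lintegral_congr_ae hsplit]
    _ ≤ ((∫⁻ y, k y * (f y / w y) ^ p ∂ν) ^ p⁻¹ * (∫⁻ y, k y * w y ^ q ∂ν) ^ q⁻¹) ^ p := by
        gcongr
        exact ENNReal.lintegral_mul_norm_pow_le (by fun_prop) (by fun_prop) (by positivity)
          (by positivity) hpq.inv_add_inv_eq_one
    _ = _ := by
        rw [ENNReal.mul_rpow_of_nonneg _ _ hp.le, ENNReal.rpow_inv_rpow hp.ne',
          ← ENNReal.rpow_mul, inv_mul_eq_div, hpq.div_conj_eq_sub_one, mul_comm]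

theorem lintegral_rpow_lintegral_mul_le_of_schur [SFinite μ] [SFinite ν]
    (hpq : p.HolderConjugate q) {K : α → β → ℝ≥0∞} (hK : Measurable (Function.uncurry K))
    {f w : β → ℝ≥0∞} {v : α → ℝ≥0∞} (hf : Measurable f) (hw : Measurable w) (hv : Measurable v)
    (hw0 : ∀ᵐ y ∂ν, w y ≠ 0) (hwt : ∀ᵐ y ∂ν, w y ≠ ⊤) {A B : ℝ≥0∞}
    (hA : ∀ᵐ x ∂μ, ∫⁻ y, K x y * w y ^ q ∂ν ≤ A * v x ^ q)
    (hB : ∀ᵐ y ∂ν, ∫⁻ x, K x y * v x ^ p ∂μ ≤ B * w y ^ p) :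
    ∫⁻ x, (∫⁻ y, K x y * f y ∂ν) ^ p ∂μ ≤ A ^ (p - 1) * B * ∫⁻ y, f y ^ p ∂ν := by
  have hp := hpq.pos
  have hKx (x : α) : Measurable (K x) := hK.of_uncurry_left
  have hKy (y : β) : Measurable (K · y) := hK.of_uncurry_right
  have hKm : Measurable fun z : α × β => K z.1 z.2 := hK
  have hrow : ∀ᵐ x ∂μ, (∫⁻ y, K x y * f y ∂ν) ^ p ≤
      A ^ (p - 1) * ∫⁻ y, v x ^ p * (K x y * (f y / w y) ^ p) ∂ν := by
    filter_upwards [hA] with x hx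
    calc (∫⁻ y, K x y * f y ∂ν) ^ p
        ≤ (A * v x ^ q) ^ (p - 1) * ∫⁻ y, K x y * (f y / w y) ^ p ∂ν := by
          refine (rpow_lintegral_mul_le_weighted hpq (hKx x) hf hw hw0 hwt).trans ?_
          gcongr
          exact hpq.sub_one_pos.le
      _ = _ := by
          rw [ENNReal.mul_rpow_of_nonneg _ _ hpq.sub_one_pos.le, ← ENNReal.rpow_mul,
            mul_comm q, hpq.sub_one_mul_conj, mul_assoc, lintegral_const_mul _ (by fun_prop)]
  have hcol : ∀ᵐ y ∂ν, ∫⁻ x, v x ^ p * (K x y * (f y / w y) ^ p) ∂μ ≤ B * f y ^ p := by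
    filter_upwards [hB, hw0, hwt] with y hy h0 ht
    calc ∫⁻ x, v x ^ p * (K x y * (f y / w y) ^ p) ∂μ
        = (f y / w y) ^ p * ∫⁻ x, K x y * v x ^ p ∂μ := by
          rw [← lintegral_const_mul _ (by fun_prop)]
          exact lintegral_congr fun x => by ring
      _ ≤ (f y / w y) ^ p * (B * w y ^ p) := by gcongr
      _ = B * f y ^ p := by
          rw [mul_left_comm, ← ENNReal.mul_rpow_of_nonneg _ _ hp.le,
            ENNReal.div_mul_cancel h0 ht]
  calc ∫⁻ x, (∫⁻ y, K x y * f y ∂ν) ^ p ∂μ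
      ≤ ∫⁻ x, A ^ (p - 1) * ∫⁻ y, v x ^ p * (K x y * (f y / w y) ^ p) ∂ν ∂μ :=
        lintegral_mono_ae hrow
    _ = A ^ (p - 1) * ∫⁻ y, ∫⁻ x, v x ^ p * (K x y * (f y / w y) ^ p) ∂μ ∂ν := by
        rw [lintegral_const_mul _ (by fun_prop), lintegral_lintegral_swap (by fun_prop)]
    _ ≤ A ^ (p - 1) * ∫⁻ y, B * f y ^ p ∂ν := by
        gcongr 1
        exact lintegral_mono_ae hcol
    _ = _ := by rw [lintegral_const_mul _ (by fun_prop), mul_assoc]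

end SchurTest

section Dominance

theorem lintegral_eq_lintegral_meas_ofReal_lt {α : Type*} [MeasurableSpace α] (μ : Measure α)
    [SFinite μ] {f : α → ℝ≥0∞} (hf : Measurable f) :
    ∫⁻ a, f a ∂μ = ∫⁻ s in Ioi (0 : ℝ), μ {a | ENNReal.ofReal s < f a} := by
  have hset : MeasurableSet {z : ℝ × α | ENNReal.ofReal z.1 < f z.2} :=
    measurableSet_lt (by fun_prop) (by fun_prop)
  have hlength (c : ℝ≥0∞) : volume.restrict (Ioi (0 : ℝ)) {s | ENNReal.ofReal s < c} = c := by
    rw [Measure.restrict_apply (measurableSet_lt (by fun_prop) measurable_const)]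
    induction c with
    | top => simp
    | coe c =>
      have : {s | ENNReal.ofReal s < c} ∩ Ioi 0 = Ioo 0 (c : ℝ) := by
        ext s
        simp only [mem_inter_iff, mem_ofPred_eq, mem_Ioi, mem_Ioo, and_comm (b := 0 < s)]
        exact and_congr_right fun hs => ENNReal.ofReal_lt_iff_lt_toReal hs.le ENNReal.coe_ne_top
      simp [this]
  calc ∫⁻ a, f a ∂μ
      = ((volume.restrict (Ioi (0 : ℝ))).prod μ) {z | ENNReal.ofReal z.1 < f z.2} := by
        rw [Measure.prod_apply_symm hset]
        exact lintegral_congr fun a => (hlength (f a)).symm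
    _ = _ := Measure.prod_apply hset

theorem lintegral_le_lintegral_of_antitone {α : Type*} [LinearOrder α] [TopologicalSpace α]
    [OrderClosedTopology α] [SecondCountableTopology α] [MeasurableSpace α] [BorelSpace α]
    {μ ν : Measure α} [SFinite μ] [SFinite ν]
    (h : ∀ A, MeasurableSet A → IsLowerSet A → μ A ≤ ν A) {w : α → ℝ≥0∞} (hw : Antitone w) :
    ∫⁻ a, w a ∂μ ≤ ∫⁻ a, w a ∂ν := by
  rw [lintegral_eq_lintegral_meas_ofReal_lt μ hw.measurable,
    lintegral_eq_lintegral_meas_ofReal_lt ν hw.measurable]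
  refine lintegral_mono fun s => h _ (measurableSet_lt measurable_const hw.measurable) ?_
  exact fun a b hba ha => lt_of_lt_of_le ha (hw hba)

lemma exists_inter_Ioo_ae_eq_Ioo_of_isLowerSet {A : Set ℝ} (hA : IsLowerSet A) (a b : ℝ) :
    ∃ c, (A ∩ Ioo a b : Set ℝ) =ᵐ[volume] Ioo a c := by
  rcases (A ∩ Ioo a b).eq_empty_or_nonempty with hempty | hne
  · exact ⟨a, by rw [hempty, Ioo_self]; rfl⟩
  have hbdd : BddAbove (A ∩ Ioo a b) := ⟨b, fun t ht => ht.2.2.le⟩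
  refine ⟨sSup (A ∩ Ioo a b), Filter.EventuallyLE.antisymm ?_ ?_⟩
  · have hsub : A ∩ Ioo a b ⊆ Ioc a (sSup (A ∩ Ioo a b)) :=
      fun t ht => ⟨ht.2.1, le_csSup hbdd ht⟩
    exact hsub.eventuallyLE.trans Ioo_ae_eq_Ioc.symm.le
  · refine LE.le.eventuallyLE fun t ht => ?_
    obtain ⟨s, hs, hts⟩ := exists_lt_of_lt_csSup hne ht.2
    exact ⟨hA hts.le hs.1, ht.1, hts.trans hs.2.2⟩

theorem setLIntegral_Ioo_mul_le_of_antitone {φ ψ w : ℝ → ℝ≥0∞} (hφ : Measurable φ)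
    (hψ : Measurable ψ) (hw : Antitone w) {a : ℝ}
    (h : ∀ c, ∫⁻ t in Ioo a c, φ t ≤ ∫⁻ t in Ioo a c, ψ t) (b : ℝ) :
    ∫⁻ t in Ioo a b, φ t * w t ≤ ∫⁻ t in Ioo a b, ψ t * w t := by
  have hdensity {χ : ℝ → ℝ≥0∞} (hχ : Measurable χ) :
      ∫⁻ t in Ioo a b, χ t * w t = ∫⁻ t, w t ∂(volume.restrict (Ioo a b)).withDensity χ :=
    (lintegral_withDensity_eq_lintegral_mul _ hχ hw.measurable).symm
  rw [hdensity hφ, hdensity hψ]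
  refine lintegral_le_lintegral_of_antitone (fun A hA hlower => ?_) hw
  obtain ⟨c, hc⟩ := exists_inter_Ioo_ae_eq_Ioo_of_isLowerSet hlower a b
  simpa only [withDensity_apply _ hA, Measure.restrict_restrict hA, setLIntegral_congr hc]
    using h c

end Dominance

section HalfLineIntegrals

lemma lintegral_Ioo_zero_ofReal_rpow {r x : ℝ} (hr : -1 < r) (hx : 0 < x) :
    ∫⁻ t in Ioo 0 x, ENNReal.ofReal t ^ r = ENNReal.ofReal (x ^ (r + 1) / (r + 1)) := by
  have hint : IntervalIntegrable (fun t : ℝ => t ^ r) volume 0 x :=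
    intervalIntegral.intervalIntegrable_rpow' hr
  have hval := integral_rpow (a := 0) (b := x) (Or.inl hr)
  rw [Real.zero_rpow (by linarith), sub_zero, intervalIntegral.integral_of_le hx.le] at hval
  rw [← hval, ofReal_integral_eq_lintegral_ofReal hint.1, setLIntegral_congr Ioo_ae_eq_Ioc]
  · exact setLIntegral_congr_fun measurableSet_Ioc fun t ht => ENNReal.ofReal_rpow_of_pos ht.1
  · filter_upwards [ae_restrict_mem measurableSet_Ioc] with t ht
    exact Real.rpow_nonneg ht.1.le _

lemma lintegral_Ioi_ofReal_rpow {r x : ℝ} (hr : r < -1) (hx : 0 < x) :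
    ∫⁻ t in Ioi x, ENNReal.ofReal t ^ r = ENNReal.ofReal (-x ^ (r + 1) / (r + 1)) := by
  rw [← integral_Ioi_rpow_of_lt hr hx,
    ofReal_integral_eq_lintegral_ofReal (integrableOn_Ioi_rpow_of_lt hr hx)]
  · exact setLIntegral_congr_fun measurableSet_Ioi
      fun t ht => ENNReal.ofReal_rpow_of_pos (hx.trans ht)
  · filter_upwards [ae_restrict_mem measurableSet_Ioi] with t ht
    exact Real.rpow_nonneg (hx.trans ht).le _

lemma lintegral_Ioi_mul_lintegral_Ioo {k φ : ℝ → ℝ≥0∞} (hk : Measurable k) (hφ : Measurable φ)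
    (a : ℝ) :
    ∫⁻ s in Ioi a, k s * ∫⁻ t in Ioo a s, φ t =
      ∫⁻ t in Ioi a, φ t * ∫⁻ s in Ioi t, k s := by
  let T : Set (ℝ × ℝ) := {z | z.2 < z.1}
  let F : ℝ × ℝ → ℝ≥0∞ := T.indicator fun z => k z.1 * φ z.2
  have hF : Measurable F := Measurable.indicator (by fun_prop)
    (measurableSet_lt measurable_snd measurable_fst)
  have hrow (s : ℝ) : k s * ∫⁻ t in Ioo a s, φ t = ∫⁻ t in Ioi a, F (s, t) := by
    have hslice : (fun t => F (s, t)) = (Iio s).indicator fun t => k s * φ t := rfl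
    rw [hslice, setLIntegral_indicator measurableSet_Iio, Iio_inter_Ioi,
      lintegral_const_mul _ hφ]
  have hcol : ∀ t ∈ Ioi a, φ t * ∫⁻ s in Ioi t, k s = ∫⁻ s in Ioi a, F (s, t) := by
    intro t ht
    have hslice : (fun s => F (s, t)) = (Ioi t).indicator fun s => k s * φ t := rfl
    rw [hslice, setLIntegral_indicator measurableSet_Ioi,
      inter_eq_left.2 (Ioi_subset_Ioi (le_of_lt ht)), lintegral_mul_const _ hk, mul_comm]
  rw [setLIntegral_congr_fun measurableSet_Ioi hcol, lintegral_congr hrow]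
  exact lintegral_lintegral_swap hF.aemeasurable

end HalfLineIntegrals

/-- The Cesàro operator on `[0,∞]`-valued functions; `cesE g` is its value at the positive part of
`g`. -/
noncomputable def cesaro (φ : ℝ → ℝ≥0∞) (x : ℝ) : ℝ≥0∞ :=
  (∫⁻ t in Ioo 0 x, φ t) / ENNReal.ofReal x

/-- The Calderón operator `Sφ(x) = ∫₀^∞ φ(t) / max(x, t) dt`, the sum of the Cesàro operator and its
formal adjoint. It provides a nonincreasing majorant of the averages of `φ`. -/
noncomputable def calderonOp (φ : ℝ → ℝ≥0∞) (x : ℝ) : ℝ≥0∞ :=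
  ∫⁻ t in Ioi 0, (ENNReal.ofReal (max x t))⁻¹ * φ t

section Cesaro

variable {φ ψ w H : ℝ → ℝ≥0∞} {x : ℝ}

lemma cesaro_eq_lintegral_smul_measure (φ : ℝ → ℝ≥0∞) (x : ℝ) :
    cesaro φ x = ∫⁻ t, φ t ∂((ENNReal.ofReal x)⁻¹ • volume.restrict (Ioo 0 x)) := by
  rw [lintegral_smul_measure, smul_eq_mul, mul_comm]
  rfl

lemma measurable_cesaro (φ : ℝ → ℝ≥0∞) : Measurable (cesaro φ) := by
  have hprim : Monotone fun x => ∫⁻ t in Ioo 0 x, φ t :=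
    fun _ _ h => lintegral_mono_set (Ioo_subset_Ioo_right h)
  exact hprim.measurable.div (by fun_prop)

lemma cesaro_mono_ae (h : ∀ᵐ t ∂volume.restrict (Ioi 0), φ t ≤ ψ t) (x : ℝ) :
    cesaro φ x ≤ cesaro ψ x := by
  unfold cesaro
  gcongr ?_ / _
  exact lintegral_mono_ae (ae_restrict_of_ae_restrict_of_subset Ioo_subset_Ioi_self h)

lemma cesaro_of_nonpos (φ : ℝ → ℝ≥0∞) (hx : x ≤ 0) : cesaro φ x = 0 := by
  simp [cesaro, Ioo_eq_empty_of_le hx]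

lemma ofReal_mul_cesaro (φ : ℝ → ℝ≥0∞) (x : ℝ) :
    ENNReal.ofReal x * cesaro φ x = ∫⁻ t in Ioo 0 x, φ t := by
  rcases le_or_gt x 0 with hx | hx
  · simp [Ioo_eq_empty_of_le hx, ENNReal.ofReal_of_nonpos hx]
  · exact ENNReal.mul_div_cancel (ENNReal.ofReal_pos.2 hx).ne' ENNReal.ofReal_ne_top

lemma cesaro_mul_le_of_monotone (hw : Monotone w) (hφ : Measurable φ) (x : ℝ) :
    cesaro (fun t => φ t * w t) x ≤ cesaro φ x * w x := by
  calc cesaro (fun t => φ t * w t) x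
      ≤ (∫⁻ t in Ioo 0 x, φ t * w x) / ENNReal.ofReal x := by
        unfold cesaro
        gcongr ?_ / _
        refine setLIntegral_mono' measurableSet_Ioo fun t ht => ?_
        gcongr
        exact hw ht.2.le
    _ = cesaro φ x * w x := by
        rw [lintegral_mul_const _ hφ, ENNReal.mul_div_right_comm]
        rfl

lemma cesaro_mul_le_of_antitone (hφ : Measurable φ) (hψ : Measurable ψ) (hw : Antitone w)
    (h : ∀ t, cesaro φ t ≤ cesaro ψ t) (x : ℝ) :
    cesaro (fun t => φ t * w t) x ≤ cesaro (fun t => ψ t * w t) x := by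
  unfold cesaro
  gcongr ?_ / _
  refine setLIntegral_Ioo_mul_le_of_antitone hφ hψ hw (fun c => ?_) x
  rw [← ofReal_mul_cesaro, ← ofReal_mul_cesaro]
  gcongr
  exact h c

lemma le_cesaro_of_antitone (hH : Antitone H) (hx : 0 < x) : H x ≤ cesaro H x := by
  have hvol : H x = (∫⁻ _ in Ioo 0 x, H x) / ENNReal.ofReal x := by
    rw [setLIntegral_const, Real.volume_Ioo, sub_zero, ENNReal.mul_div_cancel_right
      (ENNReal.ofReal_pos.2 hx).ne' ENNReal.ofReal_ne_top]
  rw [hvol]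
  unfold cesaro
  gcongr ?_ / _
  exact setLIntegral_mono' measurableSet_Ioo fun t ht => hH ht.2.le

theorem cesaro_mul_rpow_le (hφ : Measurable φ) (hH : Antitone H)
    (hφH : ∀ t, cesaro φ t ≤ H t) {α : ℝ} (hα : -1 < α) (x : ℝ) :
    cesaro (fun t => φ t * H t ^ α) x ≤ cesaro (fun t => H t ^ (1 + α)) x := by
  rcases le_or_gt x 0 with hx | hx
  · rw [cesaro_of_nonpos _ hx]
    exact zero_le
  rcases le_total α 0 with hneg | hpos
  · have hmono : Monotone fun t => H t ^ α := fun s t hst => rpow_le_rpow_of_nonpos (hH hst) hneg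
    have hanti : Antitone fun t => H t ^ (1 + α) :=
      fun s t hst => ENNReal.rpow_le_rpow (hH hst) (by linarith)
    calc cesaro (fun t => φ t * H t ^ α) x
        ≤ cesaro φ x * H x ^ α := cesaro_mul_le_of_monotone hmono hφ x
      _ ≤ H x * H x ^ α := by gcongr; exact hφH x
      _ ≤ H x ^ (1 + α) := mul_rpow_le_rpow_one_add _ hα
      _ ≤ cesaro (fun t => H t ^ (1 + α)) x := le_cesaro_of_antitone hanti hx
  · have hanti : Antitone fun t => H t ^ α := fun s t hst => ENNReal.rpow_le_rpow (hH hst) hpos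
    have haverage (t : ℝ) : cesaro φ t ≤ cesaro H t := by
      rcases le_or_gt t 0 with ht | ht
      · rw [cesaro_of_nonpos _ ht]
        exact zero_le
      · exact (hφH t).trans (le_cesaro_of_antitone hH ht)
    simpa only [ENNReal.rpow_add_of_nonneg _ _ zero_le_one hpos, ENNReal.rpow_one]
      using cesaro_mul_le_of_antitone hφ hH.measurable hanti haverage x

lemma cesaro_rpow_mul_rpow_le (hφ : Measurable φ) (hψ : Measurable ψ) {a b : ℝ} (ha : 0 ≤ a)
    (hb : 0 ≤ b) (hab : a + b = 1) (x : ℝ) :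
    cesaro (fun t => φ t ^ a * ψ t ^ b) x ≤ cesaro φ x ^ a * cesaro ψ x ^ b := by
  simp only [cesaro_eq_lintegral_smul_measure]
  exact ENNReal.lintegral_mul_norm_pow_le hφ.aemeasurable hψ.aemeasurable ha hb hab

end Cesaro

section CalderonOp

variable {φ : ℝ → ℝ≥0∞}

lemma antitone_calderonOp (φ : ℝ → ℝ≥0∞) : Antitone (calderonOp φ) := by
  intro x y hxy
  unfold calderonOp
  gcongr

lemma cesaro_le_calderonOp (φ : ℝ → ℝ≥0∞) (x : ℝ) : cesaro φ x ≤ calderonOp φ x := by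
  calc cesaro φ x ≤ ∫⁻ t in Ioo 0 x, φ t * (ENNReal.ofReal x)⁻¹ := lintegral_mul_const_le _ _
    _ = ∫⁻ t in Ioo 0 x, (ENNReal.ofReal (max x t))⁻¹ * φ t :=
        setLIntegral_congr_fun measurableSet_Ioo fun t ht => by
          simp only [max_eq_left ht.2.le, mul_comm]
    _ ≤ calderonOp φ x := lintegral_mono_set Ioo_subset_Ioi_self

lemma calderonOp_eq_zero_iff (hφ : Measurable φ) {x : ℝ} :
    calderonOp φ x = 0 ↔ φ =ᵐ[volume.restrict (Ioi 0)] 0 := by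
  rw [calderonOp, lintegral_eq_zero_iff (by fun_prop)]
  refine Filter.eventually_congr (Filter.Eventually.of_forall fun t => ?_)
  simp

theorem calderonOp_le_calderonOp_cesaro (hφ : Measurable φ) (x : ℝ) :
    calderonOp φ x ≤ calderonOp (cesaro φ) x := by
  have htail {t : ℝ} (ht : 0 < t) : (ENNReal.ofReal (max x t))⁻¹ ≤
      ∫⁻ s in Ioi t, (ENNReal.ofReal (max x s))⁻¹ * (ENNReal.ofReal s)⁻¹ := by
    have hM : 0 < max x t := lt_max_of_lt_right ht
    calc (ENNReal.ofReal (max x t))⁻¹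
        = ∫⁻ s in Ioi (max x t), ENNReal.ofReal s ^ (-2 : ℝ) := by
          rw [lintegral_Ioi_ofReal_rpow (by norm_num) hM, ← ENNReal.ofReal_inv_of_pos hM]
          norm_num [Real.rpow_neg_one]
      _ = ∫⁻ s in Ioi (max x t), (ENNReal.ofReal (max x s))⁻¹ * (ENNReal.ofReal s)⁻¹ := by
          refine setLIntegral_congr_fun measurableSet_Ioi fun s hs => ?_
          have hs' : max x t < s := hs
          have hxs : x ≤ s := (le_max_left x t).trans hs'.le
          rw [max_eq_right hxs, ← ENNReal.mul_inv (by simp) (by simp), ENNReal.rpow_neg,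
            ENNReal.rpow_two, sq]
      _ ≤ _ := lintegral_mono_set (Ioi_subset_Ioi (le_max_right x t))
  calc calderonOp φ x
      ≤ ∫⁻ t in Ioi 0, φ t *
          ∫⁻ s in Ioi t, (ENNReal.ofReal (max x s))⁻¹ * (ENNReal.ofReal s)⁻¹ := by
        refine setLIntegral_mono' measurableSet_Ioi fun t ht => ?_
        rw [mul_comm]
        gcongr
        exact htail ht
    _ = calderonOp (cesaro φ) x := by
        rw [← lintegral_Ioi_mul_lintegral_Ioo (by fun_prop) hφ 0]
        exact lintegral_congr fun s => by rw [cesaro, ENNReal.div_eq_inv_mul, mul_assoc]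

lemma calderonOp_ofReal_rpow_neg {a x : ℝ} (ha0 : 0 < a) (ha1 : a < 1) (hx : 0 < x) :
    calderonOp (fun t => ENNReal.ofReal t ^ (-a)) x =
      ENNReal.ofReal ((1 - a)⁻¹ + a⁻¹) * ENNReal.ofReal x ^ (-a) := by
  have : 0 < 1 - a := by linarith
  have hnear : ∫⁻ t in Ioc 0 x, (ENNReal.ofReal (max x t))⁻¹ * ENNReal.ofReal t ^ (-a) =
      ENNReal.ofReal ((1 - a)⁻¹ * x ^ (-a)) := by
    calc ∫⁻ t in Ioc 0 x, (ENNReal.ofReal (max x t))⁻¹ * ENNReal.ofReal t ^ (-a)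
        = ∫⁻ t in Ioc 0 x, (ENNReal.ofReal x)⁻¹ * ENNReal.ofReal t ^ (-a) :=
          setLIntegral_congr_fun measurableSet_Ioc fun t ht => by simp only [max_eq_left ht.2]
      _ = ENNReal.ofReal (x⁻¹ * (x ^ (-a + 1) / (-a + 1))) := by
          rw [lintegral_const_mul _ (by fun_prop), setLIntegral_congr Ioo_ae_eq_Ioc.symm,
            lintegral_Ioo_zero_ofReal_rpow (by linarith) hx, ← ENNReal.ofReal_inv_of_pos hx,
            ← ENNReal.ofReal_mul (by positivity)]
      _ = ENNReal.ofReal ((1 - a)⁻¹ * x ^ (-a)) := by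
          rw [Real.rpow_add_one hx.ne', neg_add_eq_sub]
          field_simp
  have hfar : ∫⁻ t in Ioi x, (ENNReal.ofReal (max x t))⁻¹ * ENNReal.ofReal t ^ (-a) =
      ENNReal.ofReal (a⁻¹ * x ^ (-a)) := by
    calc ∫⁻ t in Ioi x, (ENNReal.ofReal (max x t))⁻¹ * ENNReal.ofReal t ^ (-a)
        = ∫⁻ t in Ioi x, ENNReal.ofReal t ^ (-1 + -a) := by
          refine setLIntegral_congr_fun measurableSet_Ioi fun t ht => ?_
          have ht0 : ENNReal.ofReal t ≠ 0 := (ENNReal.ofReal_pos.2 (hx.trans ht)).ne'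
          simp only [max_eq_right (mem_Ioi.1 ht).le, ENNReal.rpow_add _ _ ht0 ENNReal.ofReal_ne_top,
            ENNReal.rpow_neg_one]
      _ = ENNReal.ofReal (a⁻¹ * x ^ (-a)) := by
          rw [lintegral_Ioi_ofReal_rpow (by linarith) hx, neg_add_cancel_comm, neg_div_neg_eq,
            inv_mul_eq_div]
  rw [calderonOp, ← Ioc_union_Ioi_eq_Ioi hx.le, lintegral_union measurableSet_Ioi
    (Ioc_disjoint_Ioi le_rfl), hnear, hfar, ← ENNReal.ofReal_add (by positivity) (by positivity),
    ← add_mul, ENNReal.ofReal_mul (by positivity), ENNReal.ofReal_rpow_of_pos hx]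

theorem lintegral_calderonOp_rpow_le {p q : ℝ} (hpq : p.HolderConjugate q) (hφ : Measurable φ) :
    ∫⁻ x in Ioi 0, calderonOp φ x ^ p ≤
      ENNReal.ofReal (p + q) ^ p * ∫⁻ x in Ioi 0, φ x ^ p := by
  let w : ℝ → ℝ≥0∞ := fun t => ENNReal.ofReal t ^ (-(p * q)⁻¹)
  have hw : Measurable w := by fun_prop
  have hw0 : ∀ᵐ t ∂volume.restrict (Ioi (0 : ℝ)), w t ≠ 0 := by
    filter_upwards [ae_restrict_mem measurableSet_Ioi] with t ht
    exact (ENNReal.rpow_pos (ENNReal.ofReal_pos.2 ht) ENNReal.ofReal_ne_top).ne'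
  have hwt : ∀ᵐ t ∂volume.restrict (Ioi (0 : ℝ)), w t ≠ ⊤ := by
    filter_upwards [ae_restrict_mem measurableSet_Ioi] with t ht
    exact ENNReal.rpow_ne_top_of_ne_zero (ENNReal.ofReal_pos.2 ht).ne' ENNReal.ofReal_ne_top
  have heigen {r s : ℝ} (hrs : r.HolderConjugate s) (hrspq : r * s = p * q) :
      ∀ᵐ x ∂volume.restrict (Ioi (0 : ℝ)),
        ∫⁻ t in Ioi 0, (ENNReal.ofReal (max x t))⁻¹ * w t ^ s =
          ENNReal.ofReal (r + s) * w x ^ s := by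
    have hpow (t : ℝ) : w t ^ s = ENNReal.ofReal t ^ (-r⁻¹) := by
      rw [← ENNReal.rpow_mul, ← hrspq, mul_inv, neg_mul,
        inv_mul_cancel_right₀ hrs.symm.ne_zero]
    filter_upwards [ae_restrict_mem measurableSet_Ioi] with x hx
    have hconst : (1 - r⁻¹)⁻¹ + r⁻¹⁻¹ = r + s := by
      rw [hrs.one_sub_inv, inv_inv, inv_inv, add_comm]
    simp only [hpow, ← hconst]
    exact calderonOp_ofReal_rpow_neg (inv_pos.2 hrs.pos) (inv_lt_one_of_one_lt₀ hrs.lt) hx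
  have hK : Measurable (Function.uncurry fun x t : ℝ => (ENNReal.ofReal (max x t))⁻¹) := by
    fun_prop
  have hschur := lintegral_rpow_lintegral_mul_le_of_schur hpq hK hφ hw hw hw0 hwt
    ((heigen hpq rfl).mono fun x hx => hx.le)
    ((heigen hpq.symm (mul_comm q p)).mono fun x hx => by
      simpa only [max_comm, add_comm q] using hx.le)
  have hconst : ENNReal.ofReal (p + q) ^ p =
      ENNReal.ofReal (p + q) ^ (p - 1) * ENNReal.ofReal (p + q) := by
    simpa using ENNReal.rpow_add_of_nonneg (p - 1) 1 hpq.sub_one_pos.le zero_le_one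
      (x := ENNReal.ofReal (p + q))
  rwa [hconst]

end CalderonOp

section Factorization

variable {p₀ p₁ p θ : ℝ}

lemma lintegral_calderonOp_rpow_lt_top {φ : ℝ → ℝ≥0∞} (hp : 1 < p) (hφ : Measurable φ)
    (h : ∫⁻ x in Ioi 0, φ x ^ p < ⊤) : ∫⁻ x in Ioi 0, calderonOp φ x ^ p < ⊤ :=
  (lintegral_calderonOp_rpow_le (Real.HolderConjugate.conjExponent hp) hφ).trans_lt
    (ENNReal.mul_lt_top (ENNReal.rpow_lt_top_of_nonneg (by linarith) ENNReal.ofReal_ne_top) h)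

lemma lintegral_calderonOp_rpow_lt_top_of_cesaro {φ : ℝ → ℝ≥0∞} (hp : 1 < p) (hφ : Measurable φ)
    (h : ∫⁻ x in Ioi 0, cesaro φ x ^ p < ⊤) : ∫⁻ x in Ioi 0, calderonOp φ x ^ p < ⊤ := by
  refine lt_of_le_of_lt (lintegral_mono fun x => ?_)
    (lintegral_calderonOp_rpow_lt_top hp (measurable_cesaro φ) h)
  exact ENNReal.rpow_le_rpow (calderonOp_le_calderonOp_cesaro hφ x) (by linarith)

theorem lintegral_cesaro_mul_rpow_lt_top {φ H : ℝ → ℝ≥0∞} {q : ℝ} (hp : 0 < p) (hq : 1 < q)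
    (hφ : Measurable φ) (hH : Antitone H) (hφH : ∀ t, cesaro φ t ≤ H t)
    (h : ∫⁻ x in Ioi 0, H x ^ p < ⊤) :
    ∫⁻ x in Ioi 0, cesaro (fun t => φ t * H t ^ (p / q - 1)) x ^ q < ⊤ := by
  have hq0 : 0 < q := by linarith
  have hα : -1 < p / q - 1 := by linarith [div_pos hp hq0]
  have hHm : Measurable H := hH.measurable
  have hHpow : ∫⁻ x in Ioi 0, (H x ^ (p / q)) ^ q < ⊤ := by
    simpa only [← ENNReal.rpow_mul, div_mul_cancel₀ p hq0.ne'] using h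
  refine lt_of_le_of_lt (lintegral_mono fun x => ?_)
    (lintegral_calderonOp_rpow_lt_top hq (by fun_prop) hHpow)
  gcongr
  calc cesaro (fun t => φ t * H t ^ (p / q - 1)) x
      ≤ cesaro (fun t => H t ^ (1 + (p / q - 1))) x := cesaro_mul_rpow_le hφ hH hφH hα x
    _ = cesaro (fun t => H t ^ (p / q)) x := by rw [add_sub_cancel]
    _ ≤ calderonOp (fun t => H t ^ (p / q)) x := cesaro_le_calderonOp _ x

lemma one_lt_of_one_div_eq (hp₀ : 1 < p₀) (hp₁ : 1 < p₁) (hθ0 : 0 < θ) (hθ1 : θ < 1)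
    (hp : 1 / p = (1 - θ) / p₀ + θ / p₁) : 1 < p := by
  have hθ1' : 0 < 1 - θ := by linarith
  have hpos : 0 < 1 / p := by rw [hp]; positivity
  have hlt : 1 / p < 1 := by
    rw [hp]
    linarith [div_lt_self hθ1' hp₀, div_lt_self hθ0 hp₁]
  rwa [div_lt_one (one_div_pos.1 hpos)] at hlt

lemma weight_mul_div_add_eq_one (hp0 : p ≠ 0) (hp : 1 / p = (1 - θ) / p₀ + θ / p₁) :
    (1 - θ) * (p / p₀) + θ * (p / p₁) = 1 := by
  have hone : p * (1 / p) = 1 := mul_one_div_cancel hp0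
  rw [hp] at hone
  linear_combination hone

theorem exists_ae_eq_rpow_mul_rpow_of_lintegral_cesaro_rpow_lt_top {φ : ℝ → ℝ≥0∞}
    (hφ : Measurable φ) (hp₀ : 1 < p₀) (hp₁ : 1 < p₁) (hθ0 : 0 < θ) (hθ1 : θ < 1)
    (hp : 1 / p = (1 - θ) / p₀ + θ / p₁) (h : ∫⁻ x in Ioi 0, cesaro φ x ^ p < ⊤) :
    ∃ φ₀ φ₁ : ℝ → ℝ≥0∞, Measurable φ₀ ∧ Measurable φ₁ ∧
      ∫⁻ x in Ioi 0, cesaro φ₀ x ^ p₀ < ⊤ ∧ ∫⁻ x in Ioi 0, cesaro φ₁ x ^ p₁ < ⊤ ∧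
        φ =ᵐ[volume.restrict (Ioi 0)] fun x => φ₀ x ^ (1 - θ) * φ₁ x ^ θ := by
  have hp1 : 1 < p := one_lt_of_one_div_eq hp₀ hp₁ hθ0 hθ1 hp
  have hp0 : 0 < p := by linarith
  have hweights := weight_mul_div_add_eq_one hp0.ne' hp
  set H := calderonOp φ
  have hH : Antitone H := antitone_calderonOp φ
  have hHm : Measurable H := hH.measurable
  have hφH : ∀ t, cesaro φ t ≤ H t := cesaro_le_calderonOp φ
  have hHp : ∫⁻ x in Ioi 0, H x ^ p < ⊤ := lintegral_calderonOp_rpow_lt_top_of_cesaro hp1 hφ h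
  refine ⟨fun t => φ t * H t ^ (p / p₀ - 1), fun t => φ t * H t ^ (p / p₁ - 1), by fun_prop,
    by fun_prop, lintegral_cesaro_mul_rpow_lt_top hp0 hp₀ hφ hH hφH hHp,
    lintegral_cesaro_mul_rpow_lt_top hp0 hp₁ hφ hH hφH hHp, ?_⟩
  have hfinite : ∀ᵐ x ∂volume.restrict (Ioi 0), H x ≠ ⊤ := by
    filter_upwards [ae_lt_top (hHm.pow_const p) hHp.ne] with x hx htop
    rw [htop, ENNReal.top_rpow_of_pos hp0] at hx
    exact hx.ne rfl
  by_cases hzero : φ =ᵐ[volume.restrict (Ioi 0)] 0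
  · filter_upwards [hzero] with x hx
    simp [hx, hθ0]
  · filter_upwards [hfinite] with x hx
    have hx0 : H x ≠ 0 := fun h0 => hzero ((calderonOp_eq_zero_iff hφ).1 h0)
    refine (mul_rpow_rpow_mul_mul_rpow_rpow_eq_self _ hx0 hx hθ0.le hθ1.le ?_).symm
    linear_combination hweights

lemma lintegral_rpow_mul_rpow_rpow_lt_top {α : Type*} [MeasurableSpace α] {μ : Measure α}
    {F₀ F₁ : α → ℝ≥0∞} (hF₀ : AEMeasurable F₀ μ) (hF₁ : AEMeasurable F₁ μ) (hp₀ : 0 < p₀)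
    (hp₁ : 0 < p₁) (hp0 : 0 < p) (hθ0 : 0 ≤ θ) (hθ1 : θ ≤ 1)
    (hp : 1 / p = (1 - θ) / p₀ + θ / p₁)
    (h₀ : ∫⁻ x, F₀ x ^ p₀ ∂μ < ⊤) (h₁ : ∫⁻ x, F₁ x ^ p₁ ∂μ < ⊤) :
    ∫⁻ x, (F₀ x ^ (1 - θ) * F₁ x ^ θ) ^ p ∂μ < ⊤ := by
  have ha : 0 ≤ (1 - θ) * (p / p₀) := mul_nonneg (by linarith) (by positivity)
  have hb : 0 ≤ θ * (p / p₁) := by positivity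
  have hsplit (x : α) : (F₀ x ^ (1 - θ) * F₁ x ^ θ) ^ p =
      (F₀ x ^ p₀) ^ ((1 - θ) * (p / p₀)) * (F₁ x ^ p₁) ^ (θ * (p / p₁)) := by
    rw [ENNReal.mul_rpow_of_nonneg _ _ hp0.le]
    simp only [← ENNReal.rpow_mul]
    congr 2 <;> field_simp
  simp only [hsplit]
  exact (ENNReal.lintegral_mul_norm_pow_le (by fun_prop) (by fun_prop) ha hb
    (weight_mul_div_add_eq_one hp0.ne' hp)).trans_lt (ENNReal.mul_lt_top
      (ENNReal.rpow_lt_top_of_nonneg ha h₀.ne) (ENNReal.rpow_lt_top_of_nonneg hb h₁.ne))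

theorem lintegral_cesaro_rpow_lt_top_of_ae_le {φ φ₀ φ₁ : ℝ → ℝ≥0∞}
    (hφ₀ : Measurable φ₀) (hφ₁ : Measurable φ₁) (hp₀ : 0 < p₀) (hp₁ : 0 < p₁) (hp0 : 0 < p)
    (hθ0 : 0 ≤ θ) (hθ1 : θ ≤ 1) (hp : 1 / p = (1 - θ) / p₀ + θ / p₁)
    (h₀ : ∫⁻ x in Ioi 0, cesaro φ₀ x ^ p₀ < ⊤) (h₁ : ∫⁻ x in Ioi 0, cesaro φ₁ x ^ p₁ < ⊤)
    (hle : ∀ᵐ x ∂volume.restrict (Ioi 0), φ x ≤ φ₀ x ^ (1 - θ) * φ₁ x ^ θ) :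
    ∫⁻ x in Ioi 0, cesaro φ x ^ p < ⊤ := by
  refine lt_of_le_of_lt (lintegral_mono fun x => ?_)
    (lintegral_rpow_mul_rpow_rpow_lt_top (measurable_cesaro φ₀).aemeasurable
      (measurable_cesaro φ₁).aemeasurable hp₀ hp₁ hp0 hθ0 hθ1 hp h₀ h₁)
  gcongr
  exact (cesaro_mono_ae hle x).trans
    (cesaro_rpow_mul_rpow_le hφ₀ hφ₁ (by linarith) hθ0 (by ring) x)

lemma memCes_toReal {φ : ℝ → ℝ≥0∞} (hp0 : 0 ≤ p) (h : ∫⁻ x in Ioi 0, cesaro φ x ^ p < ⊤) :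
    memCes p fun t => (φ t).toReal := by
  refine lt_of_le_of_lt (lintegral_mono fun x => ENNReal.rpow_le_rpow ?_ hp0) h
  exact cesaro_mono_ae (Filter.Eventually.of_forall fun t => ENNReal.ofReal_toReal_le) x

end Factorization

/-- `(Ces_{p₀})^{1−θ}(Ces_{p₁})^{θ} = Ces_p` on `[0,∞)` for `1 < p₀, p₁ < ∞`, `0 < θ < 1`
and `1/p = (1−θ)/p₀ + θ/p₁`: `C|f| ∈ L^p` iff `|f| ≤ f₀^{1−θ} f₁^{θ}` a.e. on `(0,∞)`
for some nonnegative measurable `f₀, f₁` with `Cf₀ ∈ L^{p₀}`, `Cf₁ ∈ L^{p₁}`. -/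
theorem stmt10 (p₀ p₁ θ p : ℝ) (hp₀ : 1 < p₀) (hp₁ : 1 < p₁) (hθ0 : 0 < θ) (hθ1 : θ < 1)
    (hp : 1 / p = (1 - θ) / p₀ + θ / p₁)
    (f : ℝ → ℝ) (hf : Measurable f) :
    memCes p (fun t => |f t|) ↔
      ∃ f₀ f₁ : ℝ → ℝ, Measurable f₀ ∧ Measurable f₁ ∧
        (∀ t, 0 ≤ f₀ t) ∧ (∀ t, 0 ≤ f₁ t) ∧
        memCes p₀ f₀ ∧ memCes p₁ f₁ ∧
        (∀ᵐ x ∂(MeasureTheory.volume.restrict (Set.Ioi (0:ℝ))),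
          |f x| ≤ f₀ x ^ (1 - θ) * f₁ x ^ θ) := by
  have hp1 := one_lt_of_one_div_eq hp₀ hp₁ hθ0 hθ1 hp
  constructor
  · intro h
    obtain ⟨φ₀, φ₁, hφ₀, hφ₁, h₀, h₁, hfac⟩ :=
      exists_ae_eq_rpow_mul_rpow_of_lintegral_cesaro_rpow_lt_top
        (φ := fun t => ENNReal.ofReal |f t|) (by fun_prop) hp₀ hp₁ hθ0 hθ1 hp h
    refine ⟨fun t => (φ₀ t).toReal, fun t => (φ₁ t).toReal, by fun_prop, by fun_prop,
      fun _ => ENNReal.toReal_nonneg, fun _ => ENNReal.toReal_nonneg,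
      memCes_toReal (by linarith) h₀, memCes_toReal (by linarith) h₁, ?_⟩
    filter_upwards [hfac] with x hx
    rw [ENNReal.toReal_rpow, ENNReal.toReal_rpow, ← ENNReal.toReal_mul, ← hx,
      ENNReal.toReal_ofReal (abs_nonneg _)]
  · rintro ⟨f₀, f₁, hf₀, hf₁, hf₀_nonneg, hf₁_nonneg, h₀, h₁, hle⟩
    refine lintegral_cesaro_rpow_lt_top_of_ae_le hf₀.ennreal_ofReal hf₁.ennreal_ofReal
      (by linarith) (by linarith) (by linarith) hθ0.le hθ1.le hp h₀ h₁ ?_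
    filter_upwards [hle] with x hx
    rw [ENNReal.ofReal_rpow_of_nonneg (hf₀_nonneg x) (by linarith),
      ENNReal.ofReal_rpow_of_nonneg (hf₁_nonneg x) hθ0.le,
      ← ENNReal.ofReal_mul (Real.rpow_nonneg (hf₀_nonneg x) _)]
    exact ENNReal.ofReal_le_ofReal hx
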